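/- arXiv:hep-th/9404042 — 2 statements merged into one kernel-verified Lean document; each statement's English description precedes it below -/
import Mathlib

section
/- Let τ be a symmetric 2×2 complex matrix with positive definite imaginary part and write θ[ε] for the genus-2 theta constant θ[ε](0|τ). Then θ²[00;00]·θ²[10;00] = θ²[01;00]·θ²[11;00] + θ²[00;01]·θ²[10;01]. -/
/-- Genus-2 Riemann theta function with characteristic `[a b; c d]`
(`(a,b) = ε'`, `(c,d) = ε''`), evaluated at `z = (z1, z2)` and period matrix
`τ = ((t11, t12), (t12, t22))`. -/
noncomputable def theta2 (a b c d : ℝ) (z1 z2 t11 t12 t22 : ℂ) : ℂ :=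
  ∑' m : ℤ × ℤ,
    Complex.exp
      ((Real.pi : ℂ) * Complex.I *
          (((m.1 : ℂ) + (a : ℂ) / 2) *
              (((m.1 : ℂ) + (a : ℂ) / 2) * t11 + ((m.2 : ℂ) + (b : ℂ) / 2) * t12) +
            ((m.2 : ℂ) + (b : ℂ) / 2) *
              (((m.1 : ℂ) + (a : ℂ) / 2) * t12 + ((m.2 : ℂ) + (b : ℂ) / 2) * t22)) +
        2 * (Real.pi : ℂ) * Complex.I *
          (((m.1 : ℂ) + (a : ℂ) / 2) * (z1 + (c : ℂ) / 2) +
            ((m.2 : ℂ) + (b : ℂ) / 2) * (z2 + (d : ℂ) / 2)))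

/-- The symmetric matrix `τ = ((t11, t12), (t12, t22))` has positive definite
imaginary part. -/
def posDefIm (t11 t12 t22 : ℂ) : Prop :=
  (!![t11.im, t12.im; t12.im, t22.im]).PosDef

/-!
Write `u = m + ε'/2` for the summation variable. Substituting `u = p + q`, `v = p - q` in the
product of two theta series with period matrix `τ` diagonalises the quadratic form, by the
parallelogram law, and splits the product into products of theta series with period matrix `2τ`,
one for each class `σ` of `u - v` modulo `2`. Hence the squares `θ²[ε](0|τ)` are quadratic forms in
the four constants `θ[σ;0](0|2τ)`, and the asserted relation is a polynomial identity in these.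
-/

open Matrix
open scoped Real

section Coercivity

variable {ι : Type*} [Fintype ι]

open scoped MatrixOrder in
theorem exists_pos_mul_dotProduct_self_le_of_posDef {A : Matrix ι ι ℝ} (hA : A.PosDef) :
    ∃ c > 0, ∀ x : ι → ℝ, c * (x ⬝ᵥ x) ≤ x ⬝ᵥ A *ᵥ x := by
  classical
  cases isEmpty_or_nonempty ι
  · exact ⟨1, one_pos, fun x => by simp⟩
  obtain ⟨c, hc, hcA⟩ := (CFC.exists_pos_algebraMap_le_iff hA.isStrictlyPositive.isSelfAdjoint).2
    fun _ hx => hA.isStrictlyPositive.spectrum_pos hx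
  refine ⟨c, hc, fun x => ?_⟩
  have hdiff := (Matrix.le_iff.1 hcA).dotProduct_mulVec_nonneg x
  rwa [star_trivial, sub_mulVec, dotProduct_sub, sub_nonneg, Algebra.algebraMap_eq_smul_one,
    smul_mulVec, one_mulVec, dotProduct_smul, smul_eq_mul] at hdiff

end Coercivity

section Summability

variable {ι α : Type*} [Fintype ι]

theorem summable_prod_pi_of_nonneg {f : ι → α → ℝ} (hf_nonneg : ∀ i x, 0 ≤ f i x)
    (hf : ∀ i, Summable (f i)) : Summable fun x : ι → α => ∏ i, f i (x i) := by
  classical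
  refine summable_of_sum_le (c := ∏ i, ∑' x, f i x)
    (fun x => Finset.prod_nonneg fun i _ => hf_nonneg i (x i)) fun s => ?_
  have hs_subset : s ⊆ Fintype.piFinset fun i => s.image (· i) := fun x hx =>
    Fintype.mem_piFinset.2 fun i => Finset.mem_image_of_mem _ hx
  calc ∑ x ∈ s, ∏ i, f i (x i)
      ≤ ∑ x ∈ Fintype.piFinset fun i => s.image (· i), ∏ i, f i (x i) :=
        Finset.sum_le_sum_of_subset_of_nonneg hs_subset fun x _ _ =>
          Finset.prod_nonneg fun i _ => hf_nonneg i (x i)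
    _ = ∏ i, ∑ x ∈ s.image (· i), f i x := (Finset.prod_univ_sum _ _).symm
    _ ≤ ∏ i, ∑' x, f i x := Finset.prod_le_prod
        (fun i _ => Finset.sum_nonneg fun x _ => hf_nonneg i x)
        fun i _ => (hf i).sum_le_tsum _ fun x _ => hf_nonneg i x

theorem summable_exp_neg_quadratic_int {c : ℝ} (hc : 0 < c) (s y : ℝ) :
    Summable fun n : ℤ => Real.exp (-π * c * (n + s) ^ 2 - 2 * π * (n + s) * y) := by
  have hJacobi := ((summable_jacobiTheta₂_term_iff ((c * s + y : ℝ) * Complex.I)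
    (c * Complex.I)).2 (by simpa using hc)).norm
  refine (hJacobi.mul_left (Real.exp (-π * c * s ^ 2 - 2 * π * s * y))).congr fun n => ?_
  rw [norm_jacobiTheta₂_term, ← Real.exp_add, Complex.im_ofReal_mul, Complex.im_ofReal_mul,
    Complex.I_im]
  ring_nf

end Summability

section RiemannTheta

variable {ι : Type*} [Fintype ι]

/-- The summand `exp(πi⟨x, τx⟩ + 2πi⟨x, z⟩)` of the Riemann theta series, as a function of an
arbitrary complex vector `x` in place of a point of the shifted lattice. -/
noncomputable def thetaSummand (τ : Matrix ι ι ℂ) (z x : ι → ℂ) : ℂ :=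
  Complex.exp (π * Complex.I * (x ⬝ᵥ τ *ᵥ x) + 2 * π * Complex.I * (x ⬝ᵥ z))

/-- The Riemann theta function `θ[a; b](z|τ)` with real characteristic, the genus being the
cardinality of `ι`. As in `theta2`, characteristics are halved, so integral ones are
half-periods. -/
noncomputable def riemannTheta (a b : ι → ℝ) (z : ι → ℂ) (τ : Matrix ι ι ℂ) : ℂ :=
  ∑' m : ι → ℤ, thetaSummand τ (fun i => z i + b i / 2) fun i => m i + a i / 2

theorem norm_thetaSummand_ofReal (τ : Matrix ι ι ℂ) (z : ι → ℂ) (x : ι → ℝ) :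
    ‖thetaSummand τ z fun i => x i‖ =
      Real.exp (-π * (x ⬝ᵥ τ.map Complex.im *ᵥ x) - 2 * π * (x ⬝ᵥ fun i => (z i).im)) := by
  have him_quadratic : ((fun i => (x i : ℂ)) ⬝ᵥ τ *ᵥ fun i => (x i : ℂ)).im =
      x ⬝ᵥ τ.map Complex.im *ᵥ x := by
    simp [dotProduct, mulVec]
  have him_linear : ((fun i => (x i : ℂ)) ⬝ᵥ z).im = x ⬝ᵥ fun i => (z i).im := by
    simp [dotProduct]
  rw [thetaSummand, Complex.norm_exp, ← him_quadratic, ← him_linear]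
  simp [sub_eq_add_neg]

theorem summable_norm_thetaSummand {τ : Matrix ι ι ℂ} (hτ : (τ.map Complex.im).PosDef)
    (z : ι → ℂ) (s : ι → ℝ) :
    Summable fun m : ι → ℤ => ‖thetaSummand τ z fun i => m i + s i‖ := by
  obtain ⟨c, hc, hcoercive⟩ := exists_pos_mul_dotProduct_self_le_of_posDef hτ
  refine .of_nonneg_of_le (fun _ => norm_nonneg _) (fun m => ?_) (summable_prod_pi_of_nonneg
    (fun _ _ => (Real.exp_pos _).le) fun i => summable_exp_neg_quadratic_int hc (s i) (z i).im)
  set x : ι → ℝ := fun i => m i + s i with hx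
  have hquadratic := mul_le_mul_of_nonneg_left (hcoercive x) Real.pi_pos.le
  calc ‖thetaSummand τ z fun i => m i + s i‖
      = ‖thetaSummand τ z fun i => x i‖ := by simp [hx]
    _ ≤ Real.exp (-π * c * (x ⬝ᵥ x) - 2 * π * (x ⬝ᵥ fun i => (z i).im)) := by
        rw [norm_thetaSummand_ofReal, Real.exp_le_exp]
        linarith
    _ = ∏ i, Real.exp (-π * c * x i ^ 2 - 2 * π * x i * (z i).im) := by
        simp only [← Real.exp_sum, dotProduct, Finset.sum_sub_distrib, Finset.mul_sum, sq,
          mul_assoc]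

theorem riemannTheta_add_two_mul_intCast_left (a b : ι → ℝ) (z : ι → ℂ) (τ : Matrix ι ι ℂ)
    (k : ι → ℤ) : riemannTheta (fun i => a i + 2 * k i) b z τ = riemannTheta a b z τ := by
  rw [riemannTheta, riemannTheta, ← (Equiv.addRight k).tsum_eq fun m : ι → ℤ =>
    thetaSummand τ (fun i => z i + b i / 2) fun i => m i + a i / 2]
  refine tsum_congr fun m => congrArg _ <| funext fun i => ?_
  simp only [Equiv.coe_addRight, Pi.add_apply]
  push_cast
  ring

theorem riemannTheta_add_two_mul_intCast_right (a b : ι → ℝ) (z : ι → ℂ) (τ : Matrix ι ι ℂ)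
    (k : ι → ℤ) : riemannTheta a (fun i => b i + 2 * k i) z τ =
      Complex.exp (π * Complex.I * ∑ i, a i * k i) * riemannTheta a b z τ := by
  rw [riemannTheta, riemannTheta, ← tsum_mul_left]
  refine tsum_congr fun m => ?_
  rw [thetaSummand, thetaSummand, ← Complex.exp_add, Complex.exp_eq_exp_iff_exists_int]
  refine ⟨∑ i, m i * k i, ?_⟩
  have hlinear : (fun i => (m i + a i / 2 : ℂ)) ⬝ᵥ (fun i => z i + (b i + 2 * k i : ℝ) / 2) =
      (fun i => (m i + a i / 2 : ℂ)) ⬝ᵥ (fun i => z i + b i / 2)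
        + ∑ i, (m i * k i : ℂ) + (∑ i, (a i * k i : ℂ)) / 2 := by
    rw [dotProduct, dotProduct, Finset.sum_div, ← Finset.sum_add_distrib,
      ← Finset.sum_add_distrib]
    refine Finset.sum_congr rfl fun i _ => ?_
    push_cast
    ring
  rw [hlinear]
  push_cast
  ring

end RiemannTheta

section AdditionFormula

variable {ι : Type*}

/-- The reindexing `(σ, p, q) ↦ (p + q + σ, p - q)` of pairs of lattice points, where `σ` records
the residue modulo `2` of the difference of the pair. -/
def sumDiff (x : (ι → Fin 2) × (ι → ℤ) × (ι → ℤ)) : (ι → ℤ) × (ι → ℤ) :=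
  (fun i => x.2.1 i + x.2.2 i + (x.1 i : ℕ), fun i => x.2.1 i - x.2.2 i)

theorem bijective_sumDiff : Function.Bijective (sumDiff (ι := ι)) := by
  constructor
  · rintro ⟨σ, p, q⟩ ⟨σ', p', q'⟩ h
    simp only [sumDiff, Prod.mk.injEq, funext_iff] at h ⊢
    obtain ⟨hsum, hdiff⟩ := h
    exact ⟨fun i => by grind, fun i => by grind, fun i => by grind⟩
  · rintro ⟨m, n⟩
    refine ⟨(fun i => ⟨((m i - n i) % 2).toNat, by omega⟩,
      fun i => n i + (m i - n i) / 2, fun i => (m i - n i) / 2), ?_⟩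
    simp only [sumDiff, Prod.mk.injEq, funext_iff]
    exact ⟨fun i => by omega, fun i => by omega⟩

theorem tsum_mul_tsum_eq_sum_tsum_sumDiff [Fintype ι] [DecidableEq ι] {R : Type*} [NormedRing R]
    [CompleteSpace R] {f g : (ι → ℤ) → R} (hf : Summable fun m => ‖f m‖)
    (hg : Summable fun m => ‖g m‖) :
    (∑' m, f m) * ∑' n, g n = ∑ σ : ι → Fin 2, ∑' x : (ι → ℤ) × (ι → ℤ),
      f (sumDiff (σ, x)).1 * g (sumDiff (σ, x)).2 := by
  have hsummable : Summable fun x => f (sumDiff x).1 * g (sumDiff x).2 :=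
    (Equiv.ofBijective _ bijective_sumDiff).summable_iff.2 (summable_mul_of_summable_norm hf hg)
  rw [tsum_mul_tsum_of_summable_norm hf hg, ← tsum_fintype (L := .unconditional _),
    ← hsummable.tsum_prod]
  exact ((Equiv.ofBijective _ bijective_sumDiff).tsum_eq _).symm

theorem posDef_map_im_ofReal_smul {τ : Matrix ι ι ℂ} (hτ : (τ.map Complex.im).PosDef) {c : ℝ}
    (hc : 0 < c) : (((c : ℂ) • τ).map Complex.im).PosDef := by
  have him_smul : ((c : ℂ) • τ).map Complex.im = c • τ.map Complex.im := by
    ext i j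
    simp
  exact him_smul ▸ hτ.smul hc

variable [Fintype ι]

theorem thetaSummand_add_mul_thetaSummand_sub (τ : Matrix ι ι ℂ) (z w x y : ι → ℂ) :
    thetaSummand τ z (x + y) * thetaSummand τ w (x - y) =
      thetaSummand ((2 : ℂ) • τ) (z + w) x * thetaSummand ((2 : ℂ) • τ) (z - w) y := by
  simp only [thetaSummand, ← Complex.exp_add]
  congr 1
  simp only [mulVec_add, mulVec_sub, smul_mulVec, dotProduct_add, dotProduct_sub, add_dotProduct,
    sub_dotProduct, dotProduct_smul, smul_eq_mul]
  ring

theorem thetaSummand_mul_thetaSummand_sumDiff (a a' b b' : ι → ℝ) (z w : ι → ℂ)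
    (τ : Matrix ι ι ℂ) (σ : ι → Fin 2) (p q : ι → ℤ) :
    thetaSummand τ (fun i => z i + b i / 2)
          (fun i => (sumDiff (σ, p, q)).1 i + a i / 2) *
        thetaSummand τ (fun i => w i + b' i / 2)
          (fun i => (sumDiff (σ, p, q)).2 i + a' i / 2) =
      thetaSummand ((2 : ℂ) • τ) (fun i => (z + w) i + (b + b') i / 2)
          (fun i => p i + ((a i + a' i) / 2 + (σ i : ℕ) : ℝ) / 2) *
        thetaSummand ((2 : ℂ) • τ) (fun i => (z - w) i + (b - b') i / 2)
          (fun i => q i + ((a i - a' i) / 2 + (σ i : ℕ) : ℝ) / 2) := by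
  convert thetaSummand_add_mul_thetaSummand_sub τ (fun i => z i + b i / 2)
    (fun i => w i + b' i / 2) (fun i => p i + ((a i + a' i) / 2 + (σ i : ℕ) : ℝ) / 2)
    (fun i => q i + ((a i - a' i) / 2 + (σ i : ℕ) : ℝ) / 2) using 3 <;>
  · ext i
    simp only [sumDiff, Pi.add_apply, Pi.sub_apply]
    push_cast
    ring

variable [DecidableEq ι]

theorem riemannTheta_mul_riemannTheta {τ : Matrix ι ι ℂ} (hτ : (τ.map Complex.im).PosDef)
    (a a' b b' : ι → ℝ) (z w : ι → ℂ) :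
    riemannTheta a b z τ * riemannTheta a' b' w τ = ∑ σ : ι → Fin 2,
      riemannTheta (fun i => (a i + a' i) / 2 + (σ i : ℕ)) (b + b') (z + w) ((2 : ℂ) • τ) *
        riemannTheta (fun i => (a i - a' i) / 2 + (σ i : ℕ)) (b - b') (z - w) ((2 : ℂ) • τ) := by
  have hτ_two : (((2 : ℂ) • τ).map Complex.im).PosDef := by
    simpa using posDef_map_im_ofReal_smul hτ two_pos
  have hsummable {τ' : Matrix ι ι ℂ} (hτ' : (τ'.map Complex.im).PosDef) (s : ι → ℝ)
      (z' : ι → ℂ) : Summable fun m : ι → ℤ => ‖thetaSummand τ' z' fun i => m i + s i / 2‖ := by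
    simpa using summable_norm_thetaSummand hτ' z' fun i => s i / 2
  simp only [riemannTheta]
  rw [tsum_mul_tsum_eq_sum_tsum_sumDiff (hsummable hτ a _) (hsummable hτ a' _)]
  refine Finset.sum_congr rfl fun σ _ => ?_
  rw [tsum_mul_tsum_of_summable_norm (hsummable hτ_two _ _) (hsummable hτ_two _ _)]
  exact tsum_congr fun x => thetaSummand_mul_thetaSummand_sumDiff a a' b b' z w τ σ x.1 x.2

theorem riemannTheta_intCast_zero_sq {τ : Matrix ι ι ℂ} (hτ : (τ.map Complex.im).PosDef)
    (a : ι → ℝ) (b : ι → ℤ) :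
    riemannTheta a (fun i => b i) 0 τ ^ 2 = ∑ σ : ι → Fin 2,
      Complex.exp (π * Complex.I * ∑ i, (a i + (σ i : ℕ)) * b i) *
        (riemannTheta (fun i => a i + (σ i : ℕ)) 0 0 ((2 : ℂ) • τ) *
          riemannTheta (fun i => (σ i : ℕ)) 0 0 ((2 : ℂ) • τ)) := by
  rw [sq, riemannTheta_mul_riemannTheta hτ]
  refine Finset.sum_congr rfl fun σ _ => ?_
  have hdouble : (fun i => (b i : ℝ)) + (fun i => (b i : ℝ)) =
      fun i => (0 : ι → ℝ) i + 2 * (b i : ℝ) := by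
    ext i
    simp [two_mul]
  rw [hdouble, riemannTheta_add_two_mul_intCast_right]
  simp [mul_assoc]

end AdditionFormula

section GenusTwo

variable (t11 t12 t22 : ℂ)

theorem riemannTheta_fin_two (a b : Fin 2 → ℝ) (z : Fin 2 → ℂ) :
    riemannTheta a b z !![t11, t12; t12, t22] =
      theta2 (a 0) (a 1) (b 0) (b 1) (z 0) (z 1) t11 t12 t22 := by
  rw [theta2, riemannTheta, ← (finTwoArrowEquiv ℤ).tsum_eq]
  refine tsum_congr fun m => ?_
  simp [thetaSummand, dotProduct, mulVec, Fin.sum_univ_two, mul_comm]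

/-- The second-order theta constant `θ[i j; 0 0](0|2τ)`. -/
noncomputable def theta2SecondOrder (i j : ℝ) : ℂ :=
  theta2 i j 0 0 0 0 (2 * t11) (2 * t12) (2 * t22)

theorem theta2SecondOrder_add_two_mul_intCast (i j : ℝ) (k l : ℤ) :
    theta2SecondOrder t11 t12 t22 (i + 2 * k) (j + 2 * l) = theta2SecondOrder t11 t12 t22 i j := by
  simpa [theta2SecondOrder, riemannTheta_fin_two] using riemannTheta_add_two_mul_intCast_left
    ![i, j] 0 0 !![2 * t11, 2 * t12; 2 * t12, 2 * t22] ![k, l]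

theorem theta2SecondOrder_two_left (j : ℝ) :
    theta2SecondOrder t11 t12 t22 2 j = theta2SecondOrder t11 t12 t22 0 j := by
  simpa using theta2SecondOrder_add_two_mul_intCast t11 t12 t22 0 j 1 0

theorem theta2SecondOrder_two_right (i : ℝ) :
    theta2SecondOrder t11 t12 t22 i 2 = theta2SecondOrder t11 t12 t22 i 0 := by
  simpa using theta2SecondOrder_add_two_mul_intCast t11 t12 t22 i 0 0 1

variable {t11 t12 t22}

theorem theta2_intCast_zero_sq (hτ : posDefIm t11 t12 t22) (a b : ℝ) (c d : ℤ) :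
    theta2 a b c d 0 0 t11 t12 t22 ^ 2 = ∑ i : Fin 2, ∑ j : Fin 2,
      Complex.exp (π * Complex.I * ((a + (i : ℕ)) * c + (b + (j : ℕ)) * d)) *
        (theta2SecondOrder t11 t12 t22 (a + (i : ℕ)) (b + (j : ℕ)) *
          theta2SecondOrder t11 t12 t22 (i : ℕ) (j : ℕ)) := by
  have him : (!![t11, t12; t12, t22]).map Complex.im =
      !![t11.im, t12.im; t12.im, t22.im] := by
    ext i j
    fin_cases i <;> fin_cases j <;> rfl
  have hdouble : (2 : ℂ) • !![t11, t12; t12, t22] =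
      !![2 * t11, 2 * t12; 2 * t12, 2 * t22] := by
    simp
  rw [posDefIm, ← him] at hτ
  have hsq := riemannTheta_intCast_zero_sq hτ ![a, b] ![c, d]
  rw [hdouble, ← (finTwoArrowEquiv (Fin 2)).symm.sum_comp, Fintype.sum_prod_type] at hsq
  simpa [theta2SecondOrder, riemannTheta_fin_two, Fin.sum_univ_two] using hsq

theorem theta2_zero_zero_sq (hτ : posDefIm t11 t12 t22) (a b : ℝ) :
    letI Θ := theta2SecondOrder t11 t12 t22
    theta2 a b 0 0 0 0 t11 t12 t22 ^ 2 =
      Θ a b * Θ 0 0 + Θ a (b + 1) * Θ 0 1 + Θ (a + 1) b * Θ 1 0 + Θ (a + 1) (b + 1) * Θ 1 1 := by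
  simpa [Fin.sum_univ_two, add_assoc] using theta2_intCast_zero_sq hτ a b 0 0

theorem theta2_zero_one_sq (hτ : posDefIm t11 t12 t22) (a b : ℝ) :
    letI Θ := theta2SecondOrder t11 t12 t22
    theta2 a b 0 1 0 0 t11 t12 t22 ^ 2 = Complex.exp (π * Complex.I * b) *
      (Θ a b * Θ 0 0 - Θ a (b + 1) * Θ 0 1 + Θ (a + 1) b * Θ 1 0
        - Θ (a + 1) (b + 1) * Θ 1 1) := by
  have hsq := theta2_intCast_zero_sq hτ a b 0 1
  simp only [Int.cast_zero, Int.cast_one, mul_zero, mul_one, zero_add, mul_add, Complex.exp_add,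
    Fin.sum_univ_two, Fin.isValue, Fin.coe_ofNat_eq_mod, Nat.zero_mod, CharP.cast_eq_zero,
    Complex.exp_zero, add_zero, Nat.mod_succ, Nat.cast_one, Complex.exp_pi_mul_I, mul_neg,
    neg_mul] at hsq
  linear_combination hsq

end GenusTwo

/-- **A relation between squares of even genus-2 theta constants.**
`θ²[00;00]·θ²[10;00] = θ²[01;00]·θ²[11;00] + θ²[00;01]·θ²[10;01]`. -/
theorem theta_constants_squares_rel (t11 t12 t22 : ℂ) (hτ : posDefIm t11 t12 t22) :
    theta2 0 0 0 0 0 0 t11 t12 t22 ^ 2 * theta2 1 0 0 0 0 0 t11 t12 t22 ^ 2 =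
      theta2 0 1 0 0 0 0 t11 t12 t22 ^ 2 * theta2 1 1 0 0 0 0 t11 t12 t22 ^ 2
        + theta2 0 0 0 1 0 0 t11 t12 t22 ^ 2 * theta2 1 0 0 1 0 0 t11 t12 t22 ^ 2 := by
  -- With `A, B, C, D` the constants `θ[00;00], θ[01;00], θ[10;00], θ[11;00]` at `2τ`, this is
  -- `2(A² + B² + C² + D²)(AC + BD) = 4(AB + CD)(AD + BC) + 2(A² - B² + C² - D²)(AC - BD)`.
  simp only [theta2_zero_zero_sq hτ, theta2_zero_one_sq hτ, zero_add, one_add_one_eq_two,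
    theta2SecondOrder_two_left, theta2SecondOrder_two_right, Complex.ofReal_zero, mul_zero,
    Complex.exp_zero]
  ring
end

section
/- Let τ be a symmetric 2×2 complex matrix with positive definite imaginary part and write θ[ε] for the genus-2 theta constant θ[ε](0|τ). Then θ²[11;00]·θ²[00;11] = θ²[00;00]·θ²[11;11] + θ²[10;01]·θ²[01;10]. -/
/-!
Substituting `m = j + k + σ`, `n = j - k` with `σ ∈ {0, 1}²` in the double series for
`θ[ε](0|τ)²` separates the variables, because `⟨m, τm⟩ + ⟨n, τn⟩` is twice
`⟨j + σ/2, τ(j + σ/2)⟩ + ⟨k + σ/2, τ(k + σ/2)⟩`. Hence for integral `ε` each `θ[ε](0|τ)²` is a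
quadratic form in the four numbers `θ[σ;0](0|2τ)`, and the relation is a polynomial identity in
these four numbers.
-/

/-- The summand of the series `theta2` at the lattice point `m`. -/
noncomputable def theta2Term (a b c d : ℝ) (z1 z2 t11 t12 t22 : ℂ) (m : ℤ × ℤ) : ℂ :=
  Complex.exp
    ((Real.pi : ℂ) * Complex.I *
        (((m.1 : ℂ) + a / 2) * (((m.1 : ℂ) + a / 2) * t11 + ((m.2 : ℂ) + b / 2) * t12) +
          ((m.2 : ℂ) + b / 2) * (((m.1 : ℂ) + a / 2) * t12 + ((m.2 : ℂ) + b / 2) * t22)) +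
      2 * (Real.pi : ℂ) * Complex.I *
        (((m.1 : ℂ) + a / 2) * (z1 + c / 2) + ((m.2 : ℂ) + b / 2) * (z2 + d / 2)))

theorem theta2_eq_tsum_theta2Term (a b c d : ℝ) (z1 z2 t11 t12 t22 : ℂ) :
    theta2 a b c d z1 z2 t11 t12 t22 = ∑' m, theta2Term a b c d z1 z2 t11 t12 t22 m :=
  rfl

section Convergence

theorem posDefIm.ofReal_mul {t11 t12 t22 : ℂ} (hτ : posDefIm t11 t12 t22) {r : ℝ} (hr : 0 < r) :
    posDefIm (r * t11) (r * t12) (r * t22) := by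
  simpa [posDefIm, Matrix.smul_of] using Matrix.PosDef.smul hτ hr

-- By Cayley–Hamilton, `tr M * ⟨v, Mv⟩ = det M * ⟨v, v⟩ + ⟨Mv, Mv⟩` for a symmetric 2×2 matrix `M`.
theorem exists_pos_mul_sq_add_sq_le_of_posDef {p q r : ℝ} (hM : (!![p, q; q, r]).PosDef) :
    ∃ C > 0, ∀ x y : ℝ, C * x ^ 2 + C * y ^ 2 ≤ p * x ^ 2 + 2 * q * x * y + r * y ^ 2 := by
  have hdet : 0 < p * r - q * q := by simpa [Matrix.det_fin_two_of] using hM.det_pos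
  have htr : 0 < p + r := by simpa [Matrix.trace_fin_two] using hM.trace_pos
  refine ⟨(p * r - q * q) / (p + r), div_pos hdet htr, fun x y ↦ ?_⟩
  rw [← mul_add, div_mul_eq_mul_div, div_le_iff₀ htr]
  linarith [sq_nonneg (p * x + q * y), sq_nonneg (q * x + r * y)]

theorem summable_exp_neg_pi_mul_quadratic {C : ℝ} (hC : 0 < C) (a s : ℝ) :
    Summable fun m : ℤ ↦
      Real.exp (-Real.pi * (C * ((m : ℝ) + a / 2) ^ 2 + 2 * ((m : ℝ) + a / 2) * s)) := by
  have hjacobi : Summable fun m : ℤ ↦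
      jacobiTheta₂_term m ((C * a / 2 + s : ℝ) * Complex.I) (C * Complex.I) :=
    (summable_jacobiTheta₂_term_iff _ _).2 (by simpa using hC)
  refine (hjacobi.norm.mul_right (Real.exp (-Real.pi * (C * a ^ 2 / 4 + a * s)))).congr fun m ↦ ?_
  rw [norm_jacobiTheta₂_term, ← Real.exp_add, Complex.im_ofReal_mul, Complex.im_ofReal_mul,
    Complex.I_im]
  ring_nf

theorem norm_theta2Term (a b c d : ℝ) (z1 z2 t11 t12 t22 : ℂ) (m : ℤ × ℤ) :
    ‖theta2Term a b c d z1 z2 t11 t12 t22 m‖ =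
      Real.exp (-Real.pi *
        (t11.im * ((m.1 : ℝ) + a / 2) ^ 2
            + 2 * t12.im * ((m.1 : ℝ) + a / 2) * ((m.2 : ℝ) + b / 2)
            + t22.im * ((m.2 : ℝ) + b / 2) ^ 2
          + 2 * ((m.1 : ℝ) + a / 2) * z1.im + 2 * ((m.2 : ℝ) + b / 2) * z2.im)) := by
  rw [theta2Term, Complex.norm_exp]
  congr 1
  simp only [Complex.add_re, Complex.add_im, Complex.mul_re, Complex.mul_im, Complex.ofReal_re,
    Complex.ofReal_im, Complex.I_re, Complex.I_im, Complex.intCast_re, Complex.intCast_im,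
    Complex.div_ofNat_re, Complex.div_ofNat_im, Complex.re_ofNat, Complex.im_ofNat]
  ring

theorem summable_norm_theta2Term (a b c d : ℝ) (z1 z2 : ℂ) {t11 t12 t22 : ℂ}
    (hτ : posDefIm t11 t12 t22) : Summable fun m ↦ ‖theta2Term a b c d z1 z2 t11 t12 t22 m‖ := by
  obtain ⟨C, hC, hle⟩ := exists_pos_mul_sq_add_sq_le_of_posDef hτ
  have hprod := (summable_exp_neg_pi_mul_quadratic hC a z1.im).mul_of_nonneg
    (summable_exp_neg_pi_mul_quadratic hC b z2.im)
    (fun _ ↦ (Real.exp_pos _).le) (fun _ ↦ (Real.exp_pos _).le)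
  refine hprod.of_nonneg_of_le (fun _ ↦ norm_nonneg _) fun m ↦ ?_
  rw [norm_theta2Term, ← Real.exp_add, ← mul_add, Real.exp_le_exp]
  refine mul_le_mul_of_nonpos_left ?_ (neg_nonpos.2 Real.pi_pos.le)
  linarith [hle (m.1 + a / 2) (m.2 + b / 2)]

end Convergence

section Characteristics

variable (a b c d : ℝ) (z1 z2 t11 t12 t22 : ℂ)

theorem theta2_add_two_mul_int_left (k l : ℤ) :
    theta2 (a + 2 * k) (b + 2 * l) c d z1 z2 t11 t12 t22 =
      theta2 a b c d z1 z2 t11 t12 t22 := by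
  rw [theta2_eq_tsum_theta2Term, theta2_eq_tsum_theta2Term,
    ← (Equiv.addRight (k, l)).tsum_eq (theta2Term a b c d z1 z2 t11 t12 t22)]
  refine tsum_congr fun m ↦ ?_
  simp only [theta2Term, Equiv.coe_addRight, Prod.fst_add, Prod.snd_add]
  push_cast
  ring_nf

theorem theta2_add_two_mul_int_right (k l : ℤ) :
    theta2 a b (c + 2 * k) (d + 2 * l) z1 z2 t11 t12 t22 =
      Complex.exp ((Real.pi : ℂ) * Complex.I * (a * k + b * l)) *
        theta2 a b c d z1 z2 t11 t12 t22 := by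
  rw [theta2_eq_tsum_theta2Term, theta2_eq_tsum_theta2Term, ← tsum_mul_left]
  refine tsum_congr fun m ↦ ?_
  have hperiod : Complex.exp ((m.1 * k + m.2 * l : ℤ) * (2 * Real.pi * Complex.I)) = 1 :=
    Complex.exp_int_mul_two_pi_mul_I _
  rw [← one_mul (Complex.exp _ * _), ← hperiod, theta2Term, theta2Term, ← Complex.exp_add,
    ← Complex.exp_add]
  congr 1
  push_cast
  ring

end Characteristics

section ProductFormula

theorem bijective_add_sub_parity :
    Function.Bijective fun p : (Fin 2 × Fin 2) × ((ℤ × ℤ) × (ℤ × ℤ)) ↦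
      (p.2.1 + p.2.2 + ((p.1.1 : ℤ), (p.1.2 : ℤ)), p.2.1 - p.2.2) := by
  constructor
  · rintro ⟨⟨s, t⟩, ⟨j1, j2⟩, ⟨k1, k2⟩⟩ ⟨⟨s', t'⟩, ⟨j1', j2'⟩, ⟨k1', k2'⟩⟩ h
    simp only [Prod.mk_add_mk, Prod.mk_sub_mk, Prod.mk.injEq, Fin.ext_iff] at h ⊢
    omega
  · rintro ⟨⟨m1, m2⟩, ⟨n1, n2⟩⟩
    refine ⟨((⟨((m1 - n1) % 2).toNat, by omega⟩, ⟨((m2 - n2) % 2).toNat, by omega⟩),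
      (n1 + (m1 - n1) / 2, n2 + (m2 - n2) / 2), ((m1 - n1) / 2, (m2 - n2) / 2)), ?_⟩
    simp only [Prod.mk_add_mk, Prod.mk_sub_mk, Prod.mk.injEq]
    omega

theorem tsum_eq_sum_tsum_add_sub_parity {E : Type*} [NormedAddCommGroup E] [CompleteSpace E]
    {f : (ℤ × ℤ) × (ℤ × ℤ) → E} (hf : Summable f) :
    ∑' p, f p = ∑ σ : Fin 2 × Fin 2, ∑' p : (ℤ × ℤ) × (ℤ × ℤ),
      f (p.1 + p.2 + ((σ.1 : ℤ), (σ.2 : ℤ)), p.1 - p.2) := by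
  let e := Equiv.ofBijective _ bijective_add_sub_parity
  calc
    ∑' p, f p = ∑' q, (f ∘ e) q := (e.tsum_eq f).symm
    _ = ∑' σ, ∑' p, (f ∘ e) (σ, p) := (e.summable_iff.2 hf).tsum_prod
    _ = _ := tsum_fintype _

theorem theta2Term_add_parity_mul_theta2Term_sub (a b c d a' b' c' d' : ℝ)
    (z1 z2 w1 w2 t11 t12 t22 : ℂ) (s t : ℕ) (j k : ℤ × ℤ) :
    theta2Term a b c d z1 z2 t11 t12 t22 (j + k + ((s : ℤ), (t : ℤ))) *
        theta2Term a' b' c' d' w1 w2 t11 t12 t22 (j - k) =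
      theta2Term (s + (a + a') / 2) (t + (b + b') / 2) (c + c') (d + d') (z1 + w1) (z2 + w2)
          (2 * t11) (2 * t12) (2 * t22) j *
        theta2Term (s + (a - a') / 2) (t + (b - b') / 2) (c - c') (d - d') (z1 - w1) (z2 - w2)
          (2 * t11) (2 * t12) (2 * t22) k := by
  simp only [theta2Term, ← Complex.exp_add, Prod.fst_add, Prod.snd_add, Prod.fst_sub,
    Prod.snd_sub]
  push_cast
  ring_nf

theorem theta2_mul_theta2 (a b c d a' b' c' d' : ℝ) (z1 z2 w1 w2 : ℂ) {t11 t12 t22 : ℂ}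
    (hτ : posDefIm t11 t12 t22) :
    theta2 a b c d z1 z2 t11 t12 t22 * theta2 a' b' c' d' w1 w2 t11 t12 t22 =
      ∑ σ : Fin 2 × Fin 2,
        theta2 ((σ.1 : ℕ) + (a + a') / 2) ((σ.2 : ℕ) + (b + b') / 2) (c + c') (d + d')
            (z1 + w1) (z2 + w2) (2 * t11) (2 * t12) (2 * t22) *
          theta2 ((σ.1 : ℕ) + (a - a') / 2) ((σ.2 : ℕ) + (b - b') / 2) (c - c') (d - d')
            (z1 - w1) (z2 - w2) (2 * t11) (2 * t12) (2 * t22) := by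
  have hτ₂ : posDefIm (2 * t11) (2 * t12) (2 * t22) := by
    simpa only [Complex.ofReal_ofNat] using hτ.ofReal_mul (r := 2) two_pos
  have hz := summable_norm_theta2Term a b c d z1 z2 hτ
  have hw := summable_norm_theta2Term a' b' c' d' w1 w2 hτ
  simp only [theta2_eq_tsum_theta2Term]
  calc
    _ = ∑' p : (ℤ × ℤ) × (ℤ × ℤ), theta2Term a b c d z1 z2 t11 t12 t22 p.1 *
          theta2Term a' b' c' d' w1 w2 t11 t12 t22 p.2 := tsum_mul_tsum_of_summable_norm hz hw
    _ = _ := tsum_eq_sum_tsum_add_sub_parity (summable_mul_of_summable_norm hz hw)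
    _ = _ := Finset.sum_congr rfl fun σ _ ↦ by
      simp only [theta2Term_add_parity_mul_theta2Term_sub]
      exact (tsum_mul_tsum_of_summable_norm (summable_norm_theta2Term _ _ _ _ _ _ hτ₂)
        (summable_norm_theta2Term _ _ _ _ _ _ hτ₂)).symm

end ProductFormula

section SecondOrder

/-- The second-order theta constant `θ[a b; 0 0](0|2τ)`. The squares of
the theta constants at `τ` are quadratic forms in its values with `a, b ∈ {0, 1}`. -/
noncomputable def secondOrderTheta2 (a b : ℝ) (t11 t12 t22 : ℂ) : ℂ :=
  theta2 a b 0 0 0 0 (2 * t11) (2 * t12) (2 * t22)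

@[simp]
theorem secondOrderTheta2_two_left (b : ℝ) (t11 t12 t22 : ℂ) :
    secondOrderTheta2 2 b t11 t12 t22 = secondOrderTheta2 0 b t11 t12 t22 := by
  simpa [secondOrderTheta2] using
    theta2_add_two_mul_int_left 0 b 0 0 0 0 (2 * t11) (2 * t12) (2 * t22) 1 0

@[simp]
theorem secondOrderTheta2_two_right (a : ℝ) (t11 t12 t22 : ℂ) :
    secondOrderTheta2 a 2 t11 t12 t22 = secondOrderTheta2 a 0 t11 t12 t22 := by
  simpa [secondOrderTheta2] using
    theta2_add_two_mul_int_left a 0 0 0 0 0 (2 * t11) (2 * t12) (2 * t22) 0 1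

theorem exp_pi_mul_I_mul_int (n : ℤ) :
    Complex.exp ((Real.pi : ℂ) * Complex.I * n) = (-1) ^ n := by
  rw [mul_comm, Complex.exp_int_mul, Complex.exp_pi_mul_I]

theorem theta2_zero_sq (a b c d : ℤ) {t11 t12 t22 : ℂ} (hτ : posDefIm t11 t12 t22) :
    theta2 a b c d 0 0 t11 t12 t22 ^ 2 =
      ∑ σ : Fin 2 × Fin 2, (-1) ^ ((σ.1 + a) * c + (σ.2 + b) * d) *
        (secondOrderTheta2 ((σ.1 : ℕ) + a) ((σ.2 : ℕ) + b) t11 t12 t22 *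
          secondOrderTheta2 (σ.1 : ℕ) (σ.2 : ℕ) t11 t12 t22) := by
  rw [sq, theta2_mul_theta2 _ _ _ _ _ _ _ _ _ _ _ _ hτ]
  refine Finset.sum_congr rfl fun σ _ ↦ ?_
  have hshift := theta2_add_two_mul_int_right ((σ.1 : ℕ) + a) ((σ.2 : ℕ) + b) 0 0 0 0
    (2 * t11) (2 * t12) (2 * t22) c d
  rw [← exp_pi_mul_I_mul_int, ← mul_assoc]
  push_cast at hshift ⊢
  rw [secondOrderTheta2, secondOrderTheta2, ← hshift]
  simp only [add_self_div_two, sub_self, zero_div, add_zero, zero_add, two_mul]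

end SecondOrder

/-- **A relation between squares of even genus-2 theta constants.**
`θ²[11;00]·θ²[00;11] = θ²[00;00]·θ²[11;11] + θ²[10;01]·θ²[01;10]`. -/
theorem theta_constants_squares_rel' (t11 t12 t22 : ℂ) (hτ : posDefIm t11 t12 t22) :
    theta2 1 1 0 0 0 0 t11 t12 t22 ^ 2 * theta2 0 0 1 1 0 0 t11 t12 t22 ^ 2 =
      theta2 0 0 0 0 0 0 t11 t12 t22 ^ 2 * theta2 1 1 1 1 0 0 t11 t12 t22 ^ 2
        + theta2 1 0 0 1 0 0 t11 t12 t22 ^ 2 * theta2 0 1 1 0 0 0 t11 t12 t22 ^ 2 := by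
  let Θ (i j : ℝ) : ℂ := secondOrderTheta2 i j t11 t12 t22
  have hsq (a b c d : ℤ) := theta2_zero_sq a b c d hτ
  simp only [Fintype.sum_prod_type, Fin.sum_univ_two] at hsq
  have h1100 : theta2 1 1 0 0 0 0 t11 t12 t22 ^ 2 = 2 * (Θ 0 0 * Θ 1 1 + Θ 0 1 * Θ 1 0) := by
    linear_combination (norm := (norm_num [Θ]; ring)) hsq 1 1 0 0
  have h0011 : theta2 0 0 1 1 0 0 t11 t12 t22 ^ 2 =
      Θ 0 0 ^ 2 - Θ 0 1 ^ 2 - Θ 1 0 ^ 2 + Θ 1 1 ^ 2 := by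
    linear_combination (norm := (norm_num [Θ]; ring)) hsq 0 0 1 1
  have h0000 : theta2 0 0 0 0 0 0 t11 t12 t22 ^ 2 =
      Θ 0 0 ^ 2 + Θ 0 1 ^ 2 + Θ 1 0 ^ 2 + Θ 1 1 ^ 2 := by
    linear_combination (norm := (norm_num [Θ]; ring)) hsq 0 0 0 0
  have h1111 : theta2 1 1 1 1 0 0 t11 t12 t22 ^ 2 = 2 * (Θ 0 0 * Θ 1 1 - Θ 0 1 * Θ 1 0) := by
    linear_combination (norm := (norm_num [Θ]; ring)) hsq 1 1 1 1
  have h1001 : theta2 1 0 0 1 0 0 t11 t12 t22 ^ 2 = 2 * (Θ 0 0 * Θ 1 0 - Θ 0 1 * Θ 1 1) := by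
    linear_combination (norm := (norm_num [Θ]; ring)) hsq 1 0 0 1
  have h0110 : theta2 0 1 1 0 0 0 t11 t12 t22 ^ 2 = 2 * (Θ 0 0 * Θ 0 1 - Θ 1 0 * Θ 1 1) := by
    linear_combination (norm := (norm_num [Θ]; ring)) hsq 0 1 1 0
  rw [h1100, h0011, h0000, h1111, h1001, h0110]
  ring
end
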